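/- Majority dynamics does not preserve UnanUD-consensus existence: there exist a profile P (over at least 3 alternatives) that has a UnanUD-consensus alternative, and an update order σ, such that MD_σ(P) has no UnanUD-consensus alternative. -/

import Mathlib

attribute [local instance] Classical.propDecidable

noncomputable section

/-- A preference over the set of alternatives `A`: a binary relation. -/
abbrev Pref (A : Type) := A → A → Prop

/-- A preference is a strict partial order: irreflexive and transitive. -/
def IsPref {A : Type} (pref : Pref A) : Prop :=
  Irreflexive pref ∧ Transitive pref

variable {A : Type} [Fintype A] [DecidableEq A]

/-- The support `n_P(ab)`: the number of agents preferring `a` to `b` in profile `P`. -/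
def support {n : ℕ} (P : Fin n → Pref A) (a b : A) : ℕ :=
  (Finset.univ.filter fun i => P i a b).card

/-- An update order: a list of ordered pairs of distinct alternatives containing,
for each unordered pair `{a, b}` of distinct alternatives, exactly one of `ab` or `ba`,
each exactly once. -/
def IsUpdateOrder (σ : List (A × A)) : Prop :=
  (∀ p ∈ σ, p.1 ≠ p.2) ∧
  (∀ a b : A, a ≠ b → σ.count (a, b) + σ.count (b, a) = 1)

/-- One step of majority dynamics, discussing the pair `p`: agents already ranking
`p.1` versus `p.2` keep their preference; every other agent adds `p.1 ≻ p.2` if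
`n_P(p.1 p.2) ≥ n_P(p.2 p.1)` (ties broken in favour of the first alternative of the
pair), and otherwise adds `p.2 ≻ p.1`, then takes the transitive closure. -/
def mdStep {n : ℕ} (P : Fin n → Pref A) (p : A × A) : Fin n → Pref A :=
  fun i =>
    if P i p.1 p.2 ∨ P i p.2 p.1 then P i
    else if support P p.2 p.1 ≤ support P p.1 p.2 then
      Relation.TransGen (fun x y => P i x y ∨ (x = p.1 ∧ y = p.2))
    else
      Relation.TransGen (fun x y => P i x y ∨ (x = p.2 ∧ y = p.1))

/-- Majority dynamics `MD_σ(P)`: process the pairs of the update order `σ` in order. -/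
def MD {n : ℕ} (σ : List (A × A)) (P : Fin n → Pref A) : Fin n → Pref A :=
  σ.foldl mdStep P

/-- `a` is a Condorcet winner in `P`. -/
def CondorcetWinner {n : ℕ} (P : Fin n → Pref A) (a : A) : Prop :=
  ∀ b, b ≠ a → support P b a < support P a b

/-- `a` is a Condorcet loser in `P`. -/
def CondorcetLoser {n : ℕ} (P : Fin n → Pref A) (a : A) : Prop :=
  ∀ b, b ≠ a → support P a b < support P b a

/-- `a` is undominated in a preference. -/
def Undominated {A : Type} (pref : Pref A) (a : A) : Prop := ∀ b, ¬ pref b a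

/-- `a` is dominant in a preference. -/
def Dominant {A : Type} (pref : Pref A) (a : A) : Prop := ∀ b, b ≠ a → pref a b

/-- `a` is dominated (by every other alternative) in a preference. -/
def DominatedIn {A : Type} (pref : Pref A) (a : A) : Prop := ∀ b, b ≠ a → pref b a

/-- Number of preferences of `P` in which `a` is undominated. -/
def udCount {n : ℕ} (P : Fin n → Pref A) (a : A) : ℕ :=
  (Finset.univ.filter fun i => Undominated (P i) a).card

/-- Number of preferences of `P` in which `a` is dominant. -/
def domCount {n : ℕ} (P : Fin n → Pref A) (a : A) : ℕ :=
  (Finset.univ.filter fun i => Dominant (P i) a).card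

/-- Number of preferences of `P` in which `a` is dominated. -/
def domdCount {n : ℕ} (P : Fin n → Pref A) (a : A) : ℕ :=
  (Finset.univ.filter fun i => DominatedIn (P i) a).card

/-- `a` is undominated in at least one preference and no alternative is undominated
in strictly more preferences than `a`. -/
def PlurUDTop {n : ℕ} (P : Fin n → Pref A) (a : A) : Prop :=
  0 < udCount P a ∧ ∀ b, udCount P b ≤ udCount P a

/-- `a` is the PlurUD-consensus alternative of `P`. -/
def PlurUDConsensus {n : ℕ} (P : Fin n → Pref A) (a : A) : Prop :=
  PlurUDTop P a ∧ ∀ b, PlurUDTop P b → b = a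

/-- `a` is dominant in at least one preference and no alternative is dominant
in strictly more preferences than `a`. -/
def PlurDomTop {n : ℕ} (P : Fin n → Pref A) (a : A) : Prop :=
  0 < domCount P a ∧ ∀ b, domCount P b ≤ domCount P a

/-- `a` is the PlurDom-consensus alternative of `P`. -/
def PlurDomConsensus {n : ℕ} (P : Fin n → Pref A) (a : A) : Prop :=
  PlurDomTop P a ∧ ∀ b, PlurDomTop P b → b = a

/-- `a` is dominated in at least one preference and no alternative is dominated
in strictly more preferences than `a`. -/
def PlurDomdTop {n : ℕ} (P : Fin n → Pref A) (a : A) : Prop :=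
  0 < domdCount P a ∧ ∀ b, domdCount P b ≤ domdCount P a

/-- `a` is the (unique) plurality dominated alternative of `P`. -/
def PlurDomdConsensus {n : ℕ} (P : Fin n → Pref A) (a : A) : Prop :=
  PlurDomdTop P a ∧ ∀ b, PlurDomdTop P b → b = a

/-- `a` is the MajUD-consensus alternative of `P`: undominated in strictly more than
`n / 2` of the preferences, and the unique alternative with this property. -/
def MajUDConsensus {n : ℕ} (P : Fin n → Pref A) (a : A) : Prop :=
  (n < 2 * udCount P a) ∧ ∀ b, n < 2 * udCount P b → b = a

/-- `a` is the MajDom-consensus alternative of `P`: dominant in strictly more than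
`n / 2` of the preferences (such an alternative is automatically unique). -/
def MajDomConsensus {n : ℕ} (P : Fin n → Pref A) (a : A) : Prop :=
  n < 2 * domCount P a

/-- `a` is the UnanUD-consensus alternative of `P`: undominated in every preference,
and the unique alternative with this property. -/
def UnanUDConsensus {n : ℕ} (P : Fin n → Pref A) (a : A) : Prop :=
  (∀ i, Undominated (P i) a) ∧ ∀ b, (∀ i, Undominated (P i) b) → b = a

/-- `a` is the UnanDom-consensus alternative of `P`: dominant in every preference. -/
def UnanDomConsensus {n : ℕ} (P : Fin n → Pref A) (a : A) : Prop :=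
  ∀ i, Dominant (P i) a

/-- A preference is a strict weak ordering: there is an ordered partition of the
alternatives into levels (given by a level function `f`) such that alternatives in the
same level are incomparable, and `a ≻ b` exactly when `a` is in an earlier level. -/
def IsSWO (pref : Pref A) : Prop :=
  ∃ (k : ℕ) (f : A → Fin k), ∀ a b : A, pref a b ↔ f a < f b

theorem mdStep_mono {A : Type} [Fintype A] [DecidableEq A] {n : ℕ} (P : Fin n → Pref A)
    (p : A × A) (i : Fin n) (x y : A) (h : P i x y) : mdStep P p i x y := by
  unfold mdStep
  split_ifs
  · exact h
  · exact Relation.TransGen.single (Or.inl h)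
  · exact Relation.TransGen.single (Or.inl h)

theorem MD_mono {A : Type} [Fintype A] [DecidableEq A] {n : ℕ} (σ : List (A × A))
    (P : Fin n → Pref A) (i : Fin n) (x y : A) (h : P i x y) : MD σ P i x y := by
  unfold MD
  induction σ generalizing P with
  | nil => exact h
  | cons p σ ih => exact ih _ (mdStep_mono P p i x y h)

def exP : Fin 2 → Pref (Fin 3) := fun i x y =>
  (i = 0 ∧ x = 1 ∧ y = 2) ∨ (i = 1 ∧ x = 2 ∧ y = 1)

/-- Majority dynamics does not preserve UnanUD-consensus existence. -/
theorem stmt_5 :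
    ∃ (m n : ℕ) (P : Fin n → Pref (Fin m)) (a : Fin m) (σ : List (Fin m × Fin m)),
      3 ≤ m ∧ (∀ i, IsPref (P i)) ∧ UnanUDConsensus P a ∧ IsUpdateOrder σ ∧
      ∀ b, ¬ UnanUDConsensus (MD σ P) b := by
  refine ⟨3, 2, exP, 0, [(1, 0), (0, 2), (1, 2)], le_rfl, ?_, ?_, ?_, ?_⟩
  · intro i
    refine ⟨fun x h => ?_, fun x y z h1 h2 => ?_⟩
    · unfold exP at h
      grind
    · unfold exP at h1 h2
      grind
  · refine ⟨fun i b h => ?_, fun b h => ?_⟩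
    · unfold exP at h
      grind
    · have h1 := h 0 1
      have h2 := h 1 2
      unfold exP at h1 h2
      fin_cases b <;> simp_all
  · refine ⟨by simp, fun a b hab => ?_⟩
    fin_cases a <;> fin_cases b <;> simp_all [List.count_cons]
  · rintro b ⟨h, -⟩
    have key : MD [(1, 0), (0, 2), (1, 2)] exP 0 1 0 := by
      have h0 : mdStep exP (1, 0) 0 1 0 := by
        unfold mdStep
        rw [if_neg (by simp [exP]), if_pos (by simp [support, exP])]
        exact Relation.TransGen.single (Or.inr ⟨rfl, rfl⟩)
      exact MD_mono [(0, 2), (1, 2)] _ _ _ _ h0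
    have k1 : MD [(1, 0), (0, 2), (1, 2)] exP 0 1 2 := MD_mono _ _ _ _ _ (by simp [exP])
    have k2 : MD [(1, 0), (0, 2), (1, 2)] exP 1 2 1 := MD_mono _ _ _ _ _ (by simp [exP])
    fin_cases b
    · exact h 0 1 key
    · exact h 1 2 k2
    · exact h 0 1 k1

end
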